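/- Given two real numbers b < c and two arbitrary sequences (q_n), (p_n) of complex numbers, there exists an infinitely differentiable function g : [b, c] → ℂ with g^{(n)}(b) = q_n and g^{(n)}(c) = p_n for all n ≥ 0. -/

import Mathlib

open Complex Metric Set

/-- A smooth function with bounded derivatives that agrees with `x ^ n / n!` near `0`. -/
lemma exists_contDiff_bounded_iteratedDeriv_eq_ite (n : ℕ) :
    ∃ h : ℝ → ℝ, ContDiff ℝ (⊤ : ℕ∞) h ∧
      (∃ C : ℕ → ℝ, ∀ k x, ‖iteratedDeriv k h x‖ ≤ C k) ∧
      ∀ k, iteratedDeriv k h 0 = if k = n then 1 else 0 := by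
  let χ : ContDiffBump (0 : ℝ) := ⟨1, 2, one_pos, one_lt_two⟩
  have hsmooth : ContDiff ℝ (⊤ : ℕ∞) fun x : ℝ => χ x * ((n.factorial : ℝ)⁻¹ * x ^ n) :=
    χ.contDiff.mul (contDiff_const.mul (contDiff_id.pow n))
  have hsupp : HasCompactSupport fun x : ℝ => χ x * ((n.factorial : ℝ)⁻¹ * x ^ n) :=
    χ.hasCompactSupport.mul_right
  refine ⟨_, hsmooth, ?_, fun k => ?_⟩
  · have hbound (k : ℕ) : ∃ C, ∀ x,
        ‖iteratedFDeriv ℝ k (fun x : ℝ => χ x * ((n.factorial : ℝ)⁻¹ * x ^ n)) x‖ ≤ C :=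
      (hsmooth.continuous_iteratedFDeriv (mod_cast le_top)).bounded_above_of_compact_support
        (hsupp.iteratedFDeriv k)
    choose C hC using hbound
    exact ⟨C, fun k x => norm_iteratedFDeriv_eq_norm_iteratedDeriv.ge.trans (hC k x)⟩
  · have hnear : (fun x : ℝ => χ x * ((n.factorial : ℝ)⁻¹ * x ^ n)) =ᶠ[nhds 0]
        fun x => (n.factorial : ℝ)⁻¹ * x ^ n := by
      filter_upwards [χ.eventuallyEq_one] with x hx
      simp [hx]
    rw [hnear.iteratedDeriv_eq k, iteratedDeriv_const_mul _ (by fun_prop),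
      iteratedDeriv_fun_pow_zero]
    split_ifs <;> simp [Nat.factorial_ne_zero]

/-- A smooth function with bounded derivatives whose only nonzero derivative at `0` is a prescribed
`n`-th one, and whose derivatives of order less than `n` are uniformly small. -/
lemma exists_contDiff_iteratedDeriv_eq_ite_of_pos {F : Type*} [NormedAddCommGroup F]
    [NormedSpace ℝ F] (n : ℕ) (a : F) {ε : ℝ} (hε : 0 < ε) :
    ∃ f : ℝ → F, ContDiff ℝ (⊤ : ℕ∞) f ∧
      (∃ C : ℕ → ℝ, ∀ k x, ‖iteratedDeriv k f x‖ ≤ C k) ∧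
      (∀ k < n, ∀ x, ‖iteratedDeriv k f x‖ ≤ ε) ∧
      ∀ k, iteratedDeriv k f 0 = if k = n then a else 0 := by
  obtain ⟨h, hh, ⟨C, hC⟩, h0⟩ := exists_contDiff_bounded_iteratedDeriv_eq_ite n
  have hC0 (k : ℕ) : 0 ≤ C k := (norm_nonneg _).trans (hC k 0)
  obtain ⟨L, hL1, hL⟩ : ∃ L : ℝ, 1 ≤ L ∧ ∀ k < n, C k * ‖a‖ ≤ L * ε := by
    have hterm (k : ℕ) : 0 ≤ C k * ‖a‖ / ε := by have := hC0 k; positivity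
    refine ⟨1 + ∑ k ∈ Finset.range n, C k * ‖a‖ / ε,
      le_add_of_nonneg_right (Finset.sum_nonneg fun k _ => hterm k), fun k hk => ?_⟩
    rw [← div_le_iff₀ hε]
    exact (Finset.single_le_sum (fun j _ => hterm j) (Finset.mem_range.2 hk)).trans
      (le_add_of_nonneg_left zero_le_one)
  have hL0 : 0 < L := one_pos.trans_le hL1
  have hscale : ContDiff ℝ (⊤ : ℕ∞) fun x => h (L * x) := hh.comp (by fun_prop)
  have hderiv (k : ℕ) (x : ℝ) : iteratedDeriv k (fun x => h (L * x) • ((L ^ n)⁻¹ • a)) x =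
      (L ^ k * iteratedDeriv k h (L * x)) • ((L ^ n)⁻¹ • a) := by
    rw [iteratedDeriv_smul_const (hscale.of_le (mod_cast le_top)).contDiffAt,
      iteratedDeriv_comp_const_mul (hh.of_le (mod_cast le_top))]
  have hnorm (k : ℕ) (x : ℝ) : ‖iteratedDeriv k (fun x => h (L * x) • ((L ^ n)⁻¹ • a)) x‖ ≤
      L ^ k * C k * ((L ^ n)⁻¹ * ‖a‖) := by
    rw [hderiv, norm_smul, norm_smul, norm_mul, Real.norm_of_nonneg (pow_nonneg hL0.le k),
      Real.norm_of_nonneg (inv_nonneg.2 (pow_nonneg hL0.le n))]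
    gcongr
    exact hC k _
  refine ⟨fun x => h (L * x) • ((L ^ n)⁻¹ • a), hscale.smul contDiff_const, ⟨_, hnorm⟩,
    fun k hk x => (hnorm k x).trans ?_, fun k => ?_⟩
  · calc L ^ k * C k * ((L ^ n)⁻¹ * ‖a‖) = L ^ k * (C k * ‖a‖) / L ^ n := by field_simp
      _ ≤ L ^ k * (L * ε) / L ^ n := by gcongr L ^ k * ?_ / L ^ n; exact hL k hk
      _ = L ^ (k + 1) / L ^ n * ε := by ring
      _ ≤ 1 * ε := by
        gcongr
        exact (div_le_one (pow_pos hL0 n)).2 (pow_le_pow_right₀ hL1 hk)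
      _ = ε := one_mul ε
  · rw [hderiv, mul_zero, h0]
    split_ifs with hk
    · subst hk
      simp [smul_smul, hL0.ne']
    · simp

/-- **Borel's lemma** on the real line: every sequence is the sequence of derivatives at `0` of a
smooth function. -/
theorem exists_contDiff_iteratedDeriv_zero_eq {F : Type*} [NormedAddCommGroup F]
    [NormedSpace ℝ F] [CompleteSpace F] (q : ℕ → F) :
    ∃ g : ℝ → F, ContDiff ℝ (⊤ : ℕ∞) g ∧ ∀ n, iteratedDeriv n g 0 = q n := by
  have hε (n : ℕ) : (0 : ℝ) < (1 / 2) ^ n := by positivity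
  choose f hf hbound hsmall h0 using
    fun n => exists_contDiff_iteratedDeriv_eq_ite_of_pos n (q n) (hε n)
  choose C hC using hbound
  let v (k n : ℕ) : ℝ := if k < n then (1 / 2) ^ n else C n k
  have hv (k : ℕ) : Summable (v k) := by
    refine summable_geometric_two.congr_atTop ?_
    filter_upwards [Filter.eventually_gt_atTop k] with n hn
    simp [v, hn]
  have hfv (k n : ℕ) (x : ℝ) : ‖iteratedFDeriv ℝ k (f n) x‖ ≤ v k n := by
    rw [norm_iteratedFDeriv_eq_norm_iteratedDeriv]
    by_cases hk : k < n
    · simpa only [v, if_pos hk] using hsmall n k hk x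
    · simpa only [v, if_neg hk] using hC n k x
  refine ⟨fun x => ∑' n, f n x,
    contDiff_tsum hf (fun k _ => hv k) (fun k n x _ => hfv k n x), fun k => ?_⟩
  have hsum : Summable fun n => iteratedFDeriv ℝ k (f n) 0 :=
    .of_norm_bounded (hv k) fun n => hfv k n 0
  rw [iteratedDeriv_eq_iteratedFDeriv,
    iteratedFDeriv_tsum_apply hf (fun k _ => hv k) (fun k n x _ => hfv k n x) le_top,
    ContinuousMultilinearMap.tsum_eval hsum]
  simp only [← iteratedDeriv_eq_iteratedFDeriv, h0]
  exact tsum_ite_eq' k q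

/-- Two-point Borel interpolation: given `b < c` and arbitrary sequences
`(qₙ)`, `(pₙ)` of complex numbers, there is a function `g` smooth on `[b, c]` whose
one-sided derivatives at the endpoints satisfy `g⁽ⁿ⁾(b) = qₙ` and `g⁽ⁿ⁾(c) = pₙ`. -/
theorem stmt13 (b c : ℝ) (hbc : b < c) (q p : ℕ → ℂ) :
    ∃ g : ℝ → ℂ, ContDiffOn ℝ (⊤ : ℕ∞) g (Set.Icc b c) ∧
      (∀ n : ℕ, iteratedDerivWithin n g (Set.Icc b c) b = q n) ∧
      (∀ n : ℕ, iteratedDerivWithin n g (Set.Icc b c) c = p n) := by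
  obtain ⟨u, hu, hu0⟩ := exists_contDiff_iteratedDeriv_zero_eq q
  obtain ⟨w, hw, hw0⟩ := exists_contDiff_iteratedDeriv_zero_eq p
  let χ : ContDiffBump b := ⟨(c - b) / 3, (c - b) / 2, by linarith, by linarith⟩
  let g : ℝ → ℂ := fun x => χ x • u (x - b) + (1 - χ x) • w (x - c)
  have hg : ContDiff ℝ (⊤ : ℕ∞) g :=
    (χ.contDiff.smul (hu.comp (contDiff_id.sub contDiff_const))).add
      ((contDiff_const.sub χ.contDiff).smul (hw.comp (contDiff_id.sub contDiff_const)))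
  have hwithin (n : ℕ) {x : ℝ} (hx : x ∈ Icc b c) :
      iteratedDerivWithin n g (Icc b c) x = iteratedDeriv n g x :=
    iteratedDerivWithin_eq_iteratedDeriv (uniqueDiffOn_Icc hbc)
      (hg.of_le (mod_cast le_top)).contDiffAt hx
  have hgb : g =ᶠ[nhds b] fun x => u (x - b) := by
    filter_upwards [χ.eventuallyEq_one] with x hx
    simp [g, hx]
  have hgc : g =ᶠ[nhds c] fun x => w (x - c) := by
    filter_upwards [lt_mem_nhds (show (b + c) / 2 < c by linarith)] with x hx
    have hχ : χ x = 0 := χ.zero_of_le_dist <| by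
      rw [Real.dist_eq]
      exact le_trans (by simp only [χ]; linarith) (le_abs_self _)
    simp [g, hχ]
  refine ⟨g, hg.contDiffOn, fun n => ?_, fun n => ?_⟩
  · rw [hwithin n (left_mem_Icc.2 hbc.le), hgb.iteratedDeriv_eq n, iteratedDeriv_comp_sub_const]
    simp [hu0]
  · rw [hwithin n (right_mem_Icc.2 hbc.le), hgc.iteratedDeriv_eq n, iteratedDeriv_comp_sub_const]
    simp [hw0]
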